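/- arXiv:1604.01136 — 4 statements merged into one kernel-verified Lean document; each statement's English description precedes it below -/
import Mathlib

section
/- Suppose there exists a routing feasible for the deployment x (i.e., nonnegative input flows and hop flows satisfying the input, flow-conservation and processing-capacity constraints). Then for every VNF type i ∈ {1,…,I}, the total number of instances of type i satisfies Σ_{u=1}^{U} x_{u,i} ≥ ⌈(Σ_{s=1}^{S} λ̄^s_i α^s)/b_i⌉. -/
/-!
Summing flow conservation over all servers shows that the total traffic of chain `s` entering its
position `k` is exactly the total input of the chain times `∏ j < k, lam s j`
(`sum_inflow_eq_prod_mul`). The input constraint bounds this below by `lamBar s i * α s` when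
`N s k = i`, and both sides vanish when type `i` is absent from the chain. Summing the capacity
constraints of type `i` over all servers and exchanging sums gives
`∑ s, lamBar s i * α s ≤ (∑ u, x u i) * b i`; dividing by `b i > 0` and using that the number of
instances is an integer yields the ceiling.
-/

open Finset

/-- Traffic of chain `s` entering position-`k` (0-based) instances on server `u`:
`inflow y0 y s u 0 = y0 s u` and `inflow y0 y s u (k+1) = ∑ v, y s v k u`. -/
noncomputable def inflow {S U : ℕ} (y0 : Fin S → Fin U → ℝ)
    (y : Fin S → Fin U → ℕ → Fin U → ℝ) (s : Fin S) (u : Fin U) : ℕ → ℝ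
  | 0 => y0 s u
  | k + 1 => ∑ v : Fin U, y s v k u

/-- A routing `(y0, y)` is feasible for the deployment `x`: nonnegativity,
input constraint, flow conservation and processing-capacity constraints. -/
def FeasibleRouting {S U I : ℕ} (L : Fin S → ℕ) (N : Fin S → ℕ → Fin I)
    (lam : Fin S → ℕ → ℝ) (α : Fin S → ℝ) (b : Fin I → ℝ)
    (x : Fin U → Fin I → ℕ)
    (y0 : Fin S → Fin U → ℝ) (y : Fin S → Fin U → ℕ → Fin U → ℝ) : Prop :=
  (∀ s v, 0 ≤ y0 s v) ∧ (∀ s u k v, 0 ≤ y s u k v) ∧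
  (∀ s, ∑ v, y0 s v ≥ α s) ∧
  (∀ s u k, k + 1 < L s → ∑ v, y s u k v = lam s k * inflow y0 y s u k) ∧
  (∀ u i, ∑ s, ∑ k ∈ (Finset.range (L s)).filter (fun k => N s k = i),
      inflow y0 y s u k ≤ (x u i : ℝ) * b i)

/-- Total traffic entering a position, over all servers, is the total chain input times the
cumulative gain of the earlier positions. -/
theorem sum_inflow_eq_prod_mul {S U : ℕ} {L : Fin S → ℕ} {lam : Fin S → ℕ → ℝ}
    {y0 : Fin S → Fin U → ℝ} {y : Fin S → Fin U → ℕ → Fin U → ℝ}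
    (hcons : ∀ s u k, k + 1 < L s → ∑ v, y s u k v = lam s k * inflow y0 y s u k)
    (s : Fin S) (k : ℕ) (hk : k < L s) :
    ∑ u, inflow y0 y s u k = (∏ j ∈ Finset.range k, lam s j) * ∑ v, y0 s v := by
  induction k with
  | zero => simp [inflow]
  | succ k ih =>
    calc ∑ u, inflow y0 y s u (k + 1) = ∑ u, ∑ v, y s v k u := rfl
      _ = ∑ v, ∑ u, y s v k u := Finset.sum_comm
      _ = ∑ v, lam s k * inflow y0 y s v k :=
          Finset.sum_congr rfl fun v _ => hcons s v k hk
      _ = lam s k * ∑ v, inflow y0 y s v k := (Finset.mul_sum _ _ _).symm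
      _ = _ := by rw [ih (by omega), Finset.prod_range_succ]; ring

/-- If there exists a routing feasible for the deployment `x`, then for every VNF type `i`
the total number of instances of type `i` satisfies
`∑ u, x u i ≥ ⌈(∑ s, λ̄ˢᵢ αˢ) / bᵢ⌉`. -/
theorem min_instances_lower_bound
    (S U I : ℕ)
    (L : Fin S → ℕ) (hL : ∀ s, 1 ≤ L s)
    (N : Fin S → ℕ → Fin I)
    (hNinj : ∀ s, ∀ k < L s, ∀ k' < L s, N s k = N s k' → k = k')
    (lam : Fin S → ℕ → ℝ) (hlam : ∀ s, ∀ k < L s, 0 < lam s k)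
    (lamBar : Fin S → Fin I → ℝ)
    (hlamBar : ∀ s, ∀ k < L s, lamBar s (N s k) = ∏ j ∈ Finset.range k, lam s j)
    (hlamBar0 : ∀ s i, (∀ k < L s, N s k ≠ i) → lamBar s i = 0)
    (α : Fin S → ℝ) (hα : ∀ s, 0 ≤ α s)
    (b : Fin I → ℝ) (hb : ∀ i, 0 < b i)
    (x : Fin U → Fin I → ℕ)
    (y0 : Fin S → Fin U → ℝ) (y : Fin S → Fin U → ℕ → Fin U → ℝ)
    (hfeas : FeasibleRouting L N lam α b x y0 y) :
    ∀ i : Fin I, (∑ u, (x u i : ℤ)) ≥ ⌈(∑ s, lamBar s i * α s) / b i⌉ := by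
  obtain ⟨-, -, hin, hcons, hcap⟩ := hfeas
  intro i
  have hchain : ∀ s, lamBar s i * α s ≤
      ∑ u, ∑ k ∈ (Finset.range (L s)).filter (fun k => N s k = i), inflow y0 y s u k := by
    intro s
    by_cases hs : ∃ k < L s, N s k = i
    · obtain ⟨k, hk, rfl⟩ := hs
      have hfilter : (Finset.range (L s)).filter (fun k' => N s k' = N s k) = {k} := by
        ext k'
        simp only [Finset.mem_filter, Finset.mem_range, Finset.mem_singleton]
        constructor
        · rintro ⟨hk', h⟩
          exact hNinj s k' hk' k hk h
        · rintro rfl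
          exact ⟨hk, rfl⟩
      simp only [hfilter, Finset.sum_singleton]
      rw [sum_inflow_eq_prod_mul hcons s k hk, hlamBar s k hk]
      refine mul_le_mul_of_nonneg_left (hin s) (Finset.prod_nonneg fun j hj => ?_)
      exact (hlam s j ((Finset.mem_range.mp hj).trans hk)).le
    · push Not at hs
      have hfilter : (Finset.range (L s)).filter (fun k => N s k = i) = ∅ :=
        Finset.filter_eq_empty_iff.mpr fun k hk => hs k (Finset.mem_range.mp hk)
      simp [hfilter, hlamBar0 s i hs]
  have htotal : ∑ s, lamBar s i * α s ≤ (∑ u, (x u i : ℝ)) * b i := by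
    refine (Finset.sum_le_sum fun s _ => hchain s).trans ?_
    rw [Finset.sum_comm, Finset.sum_mul]
    exact Finset.sum_le_sum fun u _ => hcap u i
  rw [ge_iff_le, Int.ceil_le, div_le_iff₀ (hb i)]
  push_cast
  exact htotal
end

section
/- Suppose the deployment x : {1,…,U} × {1,…,I} → ℕ satisfies Σ_{u=1}^{U} x_{u,i} ≥ ⌈(Σ_{s=1}^{S} λ̄^s_i α^s)/b_i⌉ for every VNF type i. Then there exists a routing feasible for x (for instance, proportional routing that splits the traffic of each chain among instances of each VNF type in proportion to the per-server instance counts). Consequently, a deployment x admits a feasible routing if and only if Σ_{u=1}^{U} x_{u,i} ≥ ⌈(Σ_{s=1}^{S} λ̄^s_i α^s)/b_i⌉ for every i, so the offline provisioning problem with explicit routing variables and the simplified offline problem with only the per-type instance-count lower bounds have exactly the same feasible deployments x and hence the same optimal value. -/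
/-!
Along every chain the total traffic reaching position `k` is multiplied by `lam s k` at each hop,
so it is at least `α s * ∏ j < k, lam s j` for a feasible routing. Adding the capacity constraints
of one type over all servers then gives `∑ s, lamBar s i * α s ≤ (∑ u, x u i) * b i`, which is
the instance-count bound (`sum_le_of_feasible`).

Conversely, let `share x i u` be the proportion of the type-`i` instances placed on server `u`.
Proportional routing sends to server `u` the fraction `share x i u` of all traffic of each chain
that needs type `i`. The load of type `i` on `u` is then `share x i u * ∑ s, lamBar s i * α s`, at
most `x u i * b i` (`exists_feasible`). If a type has no instance at all, its shares
sum to `0` instead of `1`; the bound then forces `α s = 0` for every chain using it, so the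
traffic is still balanced (`mul_sum_share`).
-/

open Finset

/-- The proportion of the type-`i` instances that are on server `u`; it is `0` (by `0 / 0 = 0`) when
no instance of type `i` is deployed. -/
noncomputable def share {U I : ℕ} (x : Fin U → Fin I → ℕ) (i : Fin I) (u : Fin U) : ℝ :=
  (x u i : ℝ) / ∑ v, (x v i : ℝ)

lemma share_nonneg {U I : ℕ} (x : Fin U → Fin I → ℕ) (i : Fin I) (u : Fin U) :
    0 ≤ share x i u := by
  unfold share
  positivity

/-- The rate at which traffic of chain `s` arrives at its `k`-th position, over all servers, when
the input constraint is tight. -/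
noncomputable def chainRate {S : ℕ} (lam : Fin S → ℕ → ℝ) (α : Fin S → ℝ)
    (s : Fin S) (k : ℕ) : ℝ :=
  α s * ∏ j ∈ range k, lam s j

lemma chainRate_nonneg {S : ℕ} {L : Fin S → ℕ} {lam : Fin S → ℕ → ℝ}
    (hlam : ∀ s, ∀ k < L s, 0 < lam s k) {α : Fin S → ℝ} (hα : ∀ s, 0 ≤ α s)
    {s : Fin S} {k : ℕ} (hk : k < L s) : 0 ≤ chainRate lam α s k :=
  mul_nonneg (hα s) (prod_nonneg fun j hj =>
    (hlam s j ((mem_range.1 hj).trans hk)).le)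

lemma chainRate_succ {S : ℕ} (lam : Fin S → ℕ → ℝ) (α : Fin S → ℝ) (s : Fin S) (k : ℕ) :
    chainRate lam α s (k + 1) = lam s k * chainRate lam α s k := by
  simp only [chainRate, prod_range_succ]
  ring

/-- The types along a chain are distinct, so the positions of type `i` contribute a single term,
or none. -/
lemma sum_chainRate {S I : ℕ} {L : Fin S → ℕ} {N : Fin S → ℕ → Fin I}
    (hNinj : ∀ s, ∀ k < L s, ∀ k' < L s, N s k = N s k' → k = k')
    {lam : Fin S → ℕ → ℝ} {lamBar : Fin S → Fin I → ℝ}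
    (hlamBar : ∀ s, ∀ k < L s, lamBar s (N s k) = ∏ j ∈ Finset.range k, lam s j)
    (hlamBar0 : ∀ s i, (∀ k < L s, N s k ≠ i) → lamBar s i = 0)
    (α : Fin S → ℝ) (s : Fin S) (i : Fin I) :
    ∑ k ∈ (range (L s)).filter (fun k => N s k = i), chainRate lam α s k
      = lamBar s i * α s := by
  by_cases h : ∃ k < L s, N s k = i
  · obtain ⟨k, hk, rfl⟩ := h
    have hf : (range (L s)).filter (fun k' => N s k' = N s k) = {k} := by
      ext k'
      simp only [mem_filter, mem_range, mem_singleton]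
      constructor
      · rintro ⟨h1, h2⟩
        exact hNinj s k' h1 k hk h2
      · rintro rfl
        exact ⟨hk, rfl⟩
    rw [hf, sum_singleton, hlamBar s k hk, chainRate, mul_comm]
  · push Not at h
    rw [hlamBar0 s i h, zero_mul, filter_eq_empty_iff.2 fun k hk => h k (mem_range.1 hk),
      sum_empty]

/-- The integer instance-count bound says that the deployed capacity of type `i` covers the
demand. -/
lemma ceil_bound_iff {U I : ℕ} (x : Fin U → Fin I → ℕ) {b : Fin I → ℝ} (hb : ∀ i, 0 < b i)
    (i : Fin I) (d : ℝ) :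
    (∑ u, (x u i : ℤ)) ≥ ⌈d / b i⌉ ↔ d ≤ (∑ u, (x u i : ℝ)) * b i := by
  rw [ge_iff_le, Int.ceil_le, div_le_iff₀ (hb i)]
  push_cast
  rfl

lemma le_sum_inflow {S U I : ℕ} {L : Fin S → ℕ} {N : Fin S → ℕ → Fin I}
    {lam : Fin S → ℕ → ℝ} (hlam : ∀ s, ∀ k < L s, 0 < lam s k)
    {α : Fin S → ℝ} {b : Fin I → ℝ} {x : Fin U → Fin I → ℕ}
    {y0 : Fin S → Fin U → ℝ} {y : Fin S → Fin U → ℕ → Fin U → ℝ}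
    (h : FeasibleRouting L N lam α b x y0 y) (s : Fin S) (k : ℕ) (hk : k < L s) :
    chainRate lam α s k ≤ ∑ u, inflow y0 y s u k := by
  obtain ⟨-, -, hin, hcons, -⟩ := h
  induction k with
  | zero => simpa [chainRate, inflow] using hin s
  | succ k ih =>
    have hk' : k < L s := Nat.lt_of_succ_lt hk
    calc chainRate lam α s (k + 1) = lam s k * chainRate lam α s k := chainRate_succ ..
      _ ≤ lam s k * ∑ u, inflow y0 y s u k :=
        mul_le_mul_of_nonneg_left (ih hk') (hlam s k hk').le
      _ = ∑ v, ∑ u, y s v k u := by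
        rw [mul_sum]
        exact sum_congr rfl fun v _ => (hcons s v k hk).symm
      _ = ∑ u, inflow y0 y s u (k + 1) := sum_comm

lemma sum_le_of_feasible {S U I : ℕ} {L : Fin S → ℕ} {N : Fin S → ℕ → Fin I}
    (hNinj : ∀ s, ∀ k < L s, ∀ k' < L s, N s k = N s k' → k = k')
    {lam : Fin S → ℕ → ℝ} (hlam : ∀ s, ∀ k < L s, 0 < lam s k)
    {lamBar : Fin S → Fin I → ℝ}
    (hlamBar : ∀ s, ∀ k < L s, lamBar s (N s k) = ∏ j ∈ Finset.range k, lam s j)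
    (hlamBar0 : ∀ s i, (∀ k < L s, N s k ≠ i) → lamBar s i = 0)
    {α : Fin S → ℝ} {b : Fin I → ℝ} {x : Fin U → Fin I → ℕ}
    {y0 : Fin S → Fin U → ℝ} {y : Fin S → Fin U → ℕ → Fin U → ℝ}
    (h : FeasibleRouting L N lam α b x y0 y) (i : Fin I) :
    ∑ s, lamBar s i * α s ≤ (∑ u, (x u i : ℝ)) * b i := by
  calc ∑ s, lamBar s i * α s
      = ∑ s, ∑ k ∈ (range (L s)).filter (fun k => N s k = i), chainRate lam α s k :=
        sum_congr rfl fun s _ => (sum_chainRate hNinj hlamBar hlamBar0 α s i).symm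
    _ ≤ ∑ s, ∑ k ∈ (range (L s)).filter (fun k => N s k = i), ∑ u, inflow y0 y s u k :=
        sum_le_sum fun s _ => sum_le_sum fun k hk =>
          le_sum_inflow hlam h s k (mem_range.1 (mem_filter.1 hk).1)
    _ = ∑ u, ∑ s, ∑ k ∈ (range (L s)).filter (fun k => N s k = i), inflow y0 y s u k := by
        rw [sum_comm]
        exact sum_congr rfl fun s _ => sum_comm
    _ ≤ ∑ u, (x u i : ℝ) * b i := sum_le_sum fun u _ => h.2.2.2.2 u i
    _ = (∑ u, (x u i : ℝ)) * b i := (sum_mul ..).symm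

/-- Splitting the traffic of a chain by shares loses nothing: either the shares sum to `1`, or
there is no instance of the type and the traffic vanishes. -/
lemma mul_sum_share {S U I : ℕ} {L : Fin S → ℕ} {N : Fin S → ℕ → Fin I}
    {lam : Fin S → ℕ → ℝ} (hlam : ∀ s, ∀ k < L s, 0 < lam s k)
    {lamBar : Fin S → Fin I → ℝ}
    (hlamBar : ∀ s, ∀ k < L s, lamBar s (N s k) = ∏ j ∈ Finset.range k, lam s j)
    (hlamBar0 : ∀ s i, (∀ k < L s, N s k ≠ i) → lamBar s i = 0)
    {α : Fin S → ℝ} (hα : ∀ s, 0 ≤ α s) {b : Fin I → ℝ} {x : Fin U → Fin I → ℕ}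
    (hx : ∀ i, ∑ s, lamBar s i * α s ≤ (∑ u, (x u i : ℝ)) * b i)
    {s : Fin S} {k : ℕ} (hk : k < L s) :
    α s * ∑ u, share x (N s k) u = α s := by
  by_cases hX : ∑ u, (x u (N s k) : ℝ) = 0
  · have hpos : 0 < lamBar s (N s k) := by
      rw [hlamBar s k hk]
      exact prod_pos fun j hj => hlam s j ((mem_range.1 hj).trans hk)
    have hnn : ∀ t, 0 ≤ lamBar t (N s k) * α t := by
      intro t
      refine mul_nonneg ?_ (hα t)
      by_cases h : ∃ k' < L t, N t k' = N s k
      · obtain ⟨k', hk', he⟩ := h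
        rw [← he, hlamBar t k' hk']
        exact prod_nonneg fun j hj => (hlam t j ((mem_range.1 hj).trans hk')).le
      · push Not at h
        exact (hlamBar0 t _ h).ge
    have h0 : lamBar s (N s k) * α s ≤ 0 :=
      calc lamBar s (N s k) * α s ≤ ∑ t, lamBar t (N s k) * α t :=
            single_le_sum (f := fun t => lamBar t (N s k) * α t)
              (fun t _ => hnn t) (mem_univ s)
        _ ≤ 0 := by simpa [hX] using hx (N s k)
    have : α s = 0 := le_antisymm (nonpos_of_mul_nonpos_right h0 hpos) (hα s)
    simp [this]
  · simp only [share]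
    rw [← sum_div, div_self hX, mul_one]

/-- Proportional routing is feasible. -/
lemma exists_feasible {S U I : ℕ} {L : Fin S → ℕ} (hL : ∀ s, 1 ≤ L s)
    {N : Fin S → ℕ → Fin I}
    (hNinj : ∀ s, ∀ k < L s, ∀ k' < L s, N s k = N s k' → k = k')
    {lam : Fin S → ℕ → ℝ} (hlam : ∀ s, ∀ k < L s, 0 < lam s k)
    {lamBar : Fin S → Fin I → ℝ}
    (hlamBar : ∀ s, ∀ k < L s, lamBar s (N s k) = ∏ j ∈ Finset.range k, lam s j)
    (hlamBar0 : ∀ s i, (∀ k < L s, N s k ≠ i) → lamBar s i = 0)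
    {α : Fin S → ℝ} (hα : ∀ s, 0 ≤ α s) {b : Fin I → ℝ} (hb : ∀ i, 0 < b i)
    {x : Fin U → Fin I → ℕ}
    (hx : ∀ i, ∑ s, lamBar s i * α s ≤ (∑ u, (x u i : ℝ)) * b i) :
    ∃ (y0 : Fin S → Fin U → ℝ) (y : Fin S → Fin U → ℕ → Fin U → ℝ),
      FeasibleRouting L N lam α b x y0 y := by
  -- The values of `y s u k v` beyond the last hop only have to be nonnegative; they are set
  -- to `0` there because `lam s k` may be negative outside the chain.
  let y0 : Fin S → Fin U → ℝ := fun s u => α s * share x (N s 0) u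
  let y : Fin S → Fin U → ℕ → Fin U → ℝ := fun s u k v =>
    if k + 1 < L s then
      chainRate lam α s (k + 1) * share x (N s k) u * share x (N s (k + 1)) v
    else 0
  have hbal : ∀ s k, k < L s → α s * ∑ u, share x (N s k) u = α s := fun s k hk =>
    mul_sum_share hlam hlamBar hlamBar0 hα hx hk
  have hbal' : ∀ s k m, m < L s →
      chainRate lam α s k * ∑ u, share x (N s m) u = chainRate lam α s k := by
    intro s k m hm
    rw [chainRate, mul_right_comm, hbal s m hm]
  have hflow : ∀ s u k, k < L s →
      inflow y0 y s u k = chainRate lam α s k * share x (N s k) u := by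
    intro s u k hk
    cases k with
    | zero => simp [inflow, y0, chainRate]
    | succ k =>
      simp only [inflow, y, if_pos hk]
      rw [← sum_mul, ← mul_sum, hbal' s (k + 1) k (Nat.lt_of_succ_lt hk)]
  refine ⟨y0, y, fun s v => mul_nonneg (hα s) (share_nonneg ..), ?_, ?_, ?_, ?_⟩
  · intro s u k v
    simp only [y]
    split_ifs with hk
    · exact mul_nonneg (mul_nonneg (chainRate_nonneg hlam hα hk) (share_nonneg ..))
        (share_nonneg ..)
    · exact le_rfl
  · intro s
    simp only [y0]
    rw [← mul_sum, hbal s 0 (hL s)]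
  · intro s u k hk
    rw [hflow s u k (Nat.lt_of_succ_lt hk)]
    simp only [y, if_pos hk]
    rw [← mul_sum, mul_right_comm, hbal' s (k + 1) (k + 1) hk, chainRate_succ, mul_assoc]
  · intro u i
    have hload : ∑ s, ∑ k ∈ (range (L s)).filter (fun k => N s k = i), inflow y0 y s u k
        = (∑ s, lamBar s i * α s) * share x i u := by
      rw [sum_mul]
      refine sum_congr rfl fun s _ => ?_
      rw [← sum_chainRate hNinj hlamBar hlamBar0 α s i, sum_mul]
      refine sum_congr rfl fun k hk => ?_
      obtain ⟨hkL, rfl⟩ := mem_filter.1 hk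
      exact hflow s u k (mem_range.1 hkL)
    rw [hload]
    refine (mul_le_mul_of_nonneg_right (hx i) (share_nonneg x i u)).trans ?_
    by_cases hX : ∑ v, (x v i : ℝ) = 0
    · rw [hX, zero_mul, zero_mul]
      exact mul_nonneg (Nat.cast_nonneg _) (hb i).le
    · rw [share, mul_right_comm, mul_div_cancel₀ _ hX]

/-- If the deployment `x` satisfies `∑ u, x u i ≥ ⌈(∑ s, λ̄ˢᵢ αˢ) / bᵢ⌉` for every VNF
type `i`, then there exists a routing feasible for `x`; consequently a deployment admits
a feasible routing if and only if these per-type instance-count lower bounds hold,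
i.e. the offline problem with routing variables and the simplified offline problem have
exactly the same feasible deployments. -/
theorem feasible_routing_iff_min_instances
    (S U I : ℕ)
    (L : Fin S → ℕ) (hL : ∀ s, 1 ≤ L s)
    (N : Fin S → ℕ → Fin I)
    (hNinj : ∀ s, ∀ k < L s, ∀ k' < L s, N s k = N s k' → k = k')
    (lam : Fin S → ℕ → ℝ) (hlam : ∀ s, ∀ k < L s, 0 < lam s k)
    (lamBar : Fin S → Fin I → ℝ)
    (hlamBar : ∀ s, ∀ k < L s, lamBar s (N s k) = ∏ j ∈ Finset.range k, lam s j)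
    (hlamBar0 : ∀ s i, (∀ k < L s, N s k ≠ i) → lamBar s i = 0)
    (α : Fin S → ℝ) (hα : ∀ s, 0 ≤ α s)
    (b : Fin I → ℝ) (hb : ∀ i, 0 < b i)
    (x : Fin U → Fin I → ℕ) :
    ((∀ i : Fin I, (∑ u, (x u i : ℤ)) ≥ ⌈(∑ s, lamBar s i * α s) / b i⌉) →
      ∃ (y0 : Fin S → Fin U → ℝ) (y : Fin S → Fin U → ℕ → Fin U → ℝ),
        FeasibleRouting L N lam α b x y0 y) ∧
    ((∃ (y0 : Fin S → Fin U → ℝ) (y : Fin S → Fin U → ℕ → Fin U → ℝ),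
        FeasibleRouting L N lam α b x y0 y) ↔
      (∀ i : Fin I, (∑ u, (x u i : ℤ)) ≥ ⌈(∑ s, lamBar s i * α s) / b i⌉)) := by
  simp only [ceil_bound_iff x hb]
  have hex := exists_feasible (x := x) hL hNinj hlam hlamBar hlamBar0 hα hb
  refine ⟨hex, ?_, hex⟩
  rintro ⟨y0, y, h⟩ i
  exact sum_le_of_feasible hNinj hlam hlamBar hlamBar0 h i
end

section
/- Let B ≥ 1 and T ≥ 1 be integers, and let p_j = ((B−1)/B)^{B−j} / (B·(1 − ((B−1)/B)^B)) for j = 1,…,B (with the convention 0^0 = 1). Define the cost c_j = (j−1) + B if j ≤ T, and c_j = T if j > T. Then Σ_{j=1}^{B} p_j · c_j ≤ (1/(1 − ((B−1)/B)^B)) · min(T, B), with equality whenever T ≤ B. -/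
/-!
Write `r = (B - 1) / B`, so that `B * r + 1 = B`, and drop the normalizing constant
`B * (1 - r ^ B)`. The partial sums over purchase days `j ≤ n` have a closed form,
`∑_{j ≤ n} r ^ (B - j) * c_j = B * min(T, n) * r ^ (B - n)` for `n ≤ B`
(`sum_weight_mul_cost`). At `n = B` this gives equality with the claimed bound for every `T`,
including `T > B`.
-/

open Finset

/-- Closed form of the unnormalized expected cost restricted to purchase days `j ≤ n`. -/
lemma sum_weight_mul_cost (B T : ℕ) (r : ℝ) (hr : (B : ℝ) * r + 1 = B) (n : ℕ) (hn : n ≤ B) :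
    ∑ j ∈ Finset.Icc 1 n, r ^ (B - j) * (if j ≤ T then ((j : ℝ) - 1) + B else (T : ℝ)) =
      B * (min T n : ℕ) * r ^ (B - n) := by
  induction n with
  | zero => simp
  | succ n ih =>
    rw [Finset.sum_Icc_succ_top (by omega), ih (by omega),
      show B - n = (B - (n + 1)) + 1 by omega, pow_succ]
    split_ifs with h
    · rw [min_eq_right h, min_eq_right (by omega : n ≤ T)]
      push_cast
      linear_combination (r ^ (B - (n + 1)) * n) * hr
    · rw [min_eq_left (by omega : T ≤ n + 1), min_eq_left (by omega : T ≤ n)]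
      linear_combination (r ^ (B - (n + 1)) * T) * hr

/-- Ski rental: with buying cost `B`, horizon `T`, buying probabilities
`p_j = ((B−1)/B)^{B−j} / (B·(1 − ((B−1)/B)^B))` and costs `c_j = (j−1) + B` for `j ≤ T`,
`c_j = T` for `j > T`, the expected cost satisfies
`∑_{j=1}^{B} p_j c_j ≤ (1/(1 − ((B−1)/B)^B)) · min(T, B)`, with equality whenever `T ≤ B`. -/
theorem skiRental_expected_cost (B T : ℕ) (hB : 1 ≤ B) (hT : 1 ≤ T)
    (p : ℕ → ℝ)
    (hp : ∀ j, p j = (((B : ℝ) - 1) / B) ^ (B - j) /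
      ((B : ℝ) * (1 - (((B : ℝ) - 1) / B) ^ B)))
    (c : ℕ → ℝ)
    (hc : ∀ j, c j = if j ≤ T then ((j : ℝ) - 1) + B else (T : ℝ)) :
    (∑ j ∈ Finset.Icc 1 B, p j * c j ≤
      (1 / (1 - (((B : ℝ) - 1) / B) ^ B)) * (min T B : ℕ)) ∧
    (T ≤ B → ∑ j ∈ Finset.Icc 1 B, p j * c j =
      (1 / (1 - (((B : ℝ) - 1) / B) ^ B)) * (min T B : ℕ)) := by
  have hB0 : (B : ℝ) ≠ 0 := by positivity
  have hr : (B : ℝ) * (((B : ℝ) - 1) / B) + 1 = B := by field_simp; ring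
  have key := sum_weight_mul_cost B T _ hr B le_rfl
  -- Cancelling the normalization only uses `B ≠ 0`; the factor `1 - r ^ B` is on both sides.
  have main : ∑ j ∈ Finset.Icc 1 B, p j * c j =
      (1 / (1 - (((B : ℝ) - 1) / B) ^ B)) * (min T B : ℕ) := by
    simp only [hp, hc, div_mul_eq_mul_div _ ((B : ℝ) * _)]
    rw [← Finset.sum_div, key, Nat.sub_self, pow_zero, mul_one, mul_div_mul_left _ _ hB0,
      one_div, div_eq_inv_mul]
  exact ⟨main.le, fun _ => main⟩
end

section
/- In the offline VNF provisioning problem, suppose x is a feasible solution that uses the minimal number of VNF instances in each time slot, i.e., Σ_{u=1}^{U} x_{u,i}(t) = n_i(t) for all i and t (in addition to satisfying the server capacity constraints). Then for every feasible solution y, cost(x) ≤ (1 + max_{i∈{1,…,I}} ψ_i/φ_i) · cost(y). In particular, any online algorithm that in every time slot deploys exactly the minimal numbers of VNF instances while respecting server capacities is (1 + max_i ψ_i/φ_i)-competitive. -/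
/-!
In each slot the deployment cost of `x` is at most `ψ i * x t u i ≤ M * (φ i * x t u i)` with
`M = max_i ψ i / φ i`, so the cost of `x` is at most `1 + M` times its operational cost. The
operational cost depends only on the total number of instances of each type per slot, hence by
minimality it is at most the operational cost, and a fortiori the full cost, of any feasible `y`.
-/

open Finset

/-- Total cost of a VNF provisioning solution `x` over time slots `1,…,T`:
operational cost plus deployment cost. -/
noncomputable def vnfCost (T U I : ℕ) (φ ψ : Fin I → ℝ)
    (x : ℕ → Fin U → Fin I → ℕ) : ℝ :=
  ∑ t ∈ Finset.Icc 1 T, ∑ u : Fin U, ∑ i : Fin I,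
    (φ i * (x t u i : ℝ) + ψ i * max ((x t u i : ℝ) - (x (t - 1) u i : ℝ)) 0)

/-- Feasibility of a VNF provisioning solution: zero initial deployment, at least
`n t i` instances of each type `i` at every time `t ∈ {1,…,T}`, and server resource
capacities respected. -/
def vnfFeasible (T U I R : ℕ) (n : ℕ → Fin I → ℕ)
    (c : Fin I → Fin R → ℝ) (C : Fin R → ℝ) (x : ℕ → Fin U → Fin I → ℕ) : Prop :=
  (∀ u i, x 0 u i = 0) ∧
  (∀ t ∈ Finset.Icc 1 T, ∀ i : Fin I, ∑ u, x t u i ≥ n t i) ∧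
  (∀ t ∈ Finset.Icc 1 T, ∀ (u : Fin U) (r : Fin R), ∑ i, (x t u i : ℝ) * c i r ≤ C r)

/-- Any feasible solution `x` that uses the minimal number of VNF instances in each time
slot (`∑ u, x t u i = n t i`) has cost at most `(1 + max_i ψ_i/φ_i)` times the cost of any
feasible solution `y`; hence any online algorithm deploying exactly the minimal numbers of
instances while respecting server capacities is `(1 + max_i ψ_i/φ_i)`-competitive. -/
theorem minimal_provisioning_competitive
    (T U I R : ℕ) (hI : 0 < I)
    (n : ℕ → Fin I → ℕ)
    (c : Fin I → Fin R → ℝ) (hc : ∀ i r, 0 ≤ c i r)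
    (C : Fin R → ℝ) (hC : ∀ r, 0 ≤ C r)
    (φ ψ : Fin I → ℝ) (hφ : ∀ i, 0 < φ i) (hψ : ∀ i, 0 ≤ ψ i)
    (x y : ℕ → Fin U → Fin I → ℕ)
    (hx : vnfFeasible T U I R n c C x)
    (hxmin : ∀ t ∈ Finset.Icc 1 T, ∀ i : Fin I, ∑ u, x t u i = n t i)
    (hy : vnfFeasible T U I R n c C y) :
    vnfCost T U I φ ψ x ≤
      (1 + Finset.univ.sup' (Finset.univ_nonempty_iff.mpr ⟨⟨0, hI⟩⟩)
        (fun i : Fin I => ψ i / φ i)) * vnfCost T U I φ ψ y := by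
  set M := Finset.univ.sup' (Finset.univ_nonempty_iff.mpr ⟨⟨0, hI⟩⟩)
    (fun i : Fin I => ψ i / φ i) with hM
  have hψM : ∀ i, ψ i ≤ M * φ i := fun i =>
    (div_le_iff₀ (hφ i)).mp
      (Finset.le_sup' (fun i : Fin I => ψ i / φ i) (Finset.mem_univ i))
  have hM0 : 0 ≤ M :=
    (div_nonneg (hψ ⟨0, hI⟩) (hφ ⟨0, hI⟩).le).trans
      (Finset.le_sup' (fun i : Fin I => ψ i / φ i) (Finset.mem_univ _))
  unfold vnfCost
  rw [Finset.mul_sum]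
  refine Finset.sum_le_sum fun t ht => ?_
  calc ∑ u, ∑ i, (φ i * (x t u i : ℝ) + ψ i * max ((x t u i : ℝ) - (x (t - 1) u i : ℝ)) 0)
      ≤ ∑ u, ∑ i, (1 + M) * (φ i * (x t u i : ℝ)) := by
        refine Finset.sum_le_sum fun u _ => Finset.sum_le_sum fun i _ => ?_
        -- at most all of the running instances are newly deployed
        have hmax : max ((x t u i : ℝ) - (x (t - 1) u i : ℝ)) 0 ≤ x t u i :=
          max_le (sub_le_self _ (Nat.cast_nonneg _)) (Nat.cast_nonneg _)
        have h1 := mul_le_mul_of_nonneg_left hmax (hψ i)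
        have h2 := mul_le_mul_of_nonneg_right (hψM i) (Nat.cast_nonneg (α := ℝ) (x t u i))
        linarith
    _ = (1 + M) * ∑ i, φ i * ((∑ u, x t u i : ℕ) : ℝ) := by
        rw [Finset.sum_comm]
        simp only [Nat.cast_sum, Finset.mul_sum]
    _ ≤ (1 + M) * ∑ i, φ i * ((∑ u, y t u i : ℕ) : ℝ) := by
        refine mul_le_mul_of_nonneg_left (Finset.sum_le_sum fun i _ => ?_) (by linarith)
        refine mul_le_mul_of_nonneg_left (Nat.cast_le.mpr ?_) (hφ i).le
        exact (hxmin t ht i).trans_le (hy.2.1 t ht i)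
    _ = (1 + M) * ∑ u, ∑ i, φ i * (y t u i : ℝ) := by
        rw [Finset.sum_comm]
        simp only [Nat.cast_sum, Finset.mul_sum]
    _ ≤ _ := by
        refine mul_le_mul_of_nonneg_left
          (Finset.sum_le_sum fun u _ => Finset.sum_le_sum fun i _ => ?_) (by linarith)
        exact le_add_of_nonneg_right (mul_nonneg (hψ i) (le_max_right _ _))
end
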